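/- arXiv:2504.18302 — 2 statements merged into one kernel-verified Lean document; each statement's English description precedes it below -/
import Mathlib

section
/- Let G=(V,E) be a graph and let K ⊆ V be such that G[K] is a complete graph. Suppose A and B are disjoint nonempty subsets of V ∖ K such that G[A] and G[B] are connected, every vertex of K has a neighbor in A, every vertex of K has a neighbor in B, and A and B lie in the same connected component of G − K. Then tw(G) ≥ |K| + 1. -/
/-! Preliminary definitions: rooted tree decompositions, `S`-traces, `S`-nice and
slim tree decompositions, following Chapelle et al. -/

/-- A walk in `G` all of whose vertices lie in the set `W`. -/
def SimpleGraph.ReachableIn {V : Type} (G : SimpleGraph V) (W : Set V) (u v : V) : Prop :=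
  ∃ p : G.Walk u v, ∀ x ∈ p.support, x ∈ W

/-- The open neighborhood of a set of vertices. -/
def SimpleGraph.nbhdSet {V : Type} (G : SimpleGraph V) (W : Set V) : Set V :=
  {x | x ∉ W ∧ ∃ w ∈ W, G.Adj w x}

/-- The vertex set of the connected component of `G − X` that contains `v`
(assuming `v ∉ X`). -/
def SimpleGraph.compOutside {V : Type} (G : SimpleGraph V) (X : Set V) (v : V) : Set V :=
  {w | G.ReachableIn Xᶜ v w}

/-- A rooted tree decomposition of a graph `G` on vertex type `V`, with node type `ι`.
The rooted tree is given by a parent function: the root is a fixed point of `parent`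
and every node reaches the root by iterating `parent`.  The bags satisfy the three
usual conditions of a tree decomposition; connectedness of `{t | v ∈ bag t}` is
expressed by the existence of a highest node `m` containing `v` such that from any
node whose bag contains `v` the whole ancestor chain up to `m` contains `v`. -/
structure RootedTreeDecomp (V ι : Type) (G : SimpleGraph V) where
  root : ι
  parent : ι → ι
  parent_root : parent root = root
  reaches_root : ∀ t : ι, ∃ n : ℕ, parent^[n] t = root
  bag : ι → Set V
  bags_cover : ∀ v : V, ∃ t : ι, v ∈ bag t
  bags_of_edges : ∀ ⦃u v : V⦄, G.Adj u v → ∃ t : ι, u ∈ bag t ∧ v ∈ bag t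
  bags_connected : ∀ v : V, ∃ m : ι, v ∈ bag m ∧
    ∀ t : ι, v ∈ bag t → ∃ n : ℕ, parent^[n] t = m ∧ ∀ i ≤ n, v ∈ bag (parent^[i] t)

namespace RootedTreeDecomp

variable {V ι : Type} {G : SimpleGraph V}

/-- `t'` lies in the subtree `T_t` rooted at `t`; equivalently, `t` is an
ancestor (possibly equal) of `t'`. -/
def InSubtree (𝒯 : RootedTreeDecomp V ι G) (t t' : ι) : Prop :=
  ∃ n : ℕ, 𝒯.parent^[n] t' = t

/-- `t` is the parent of `t'`. -/
def IsParent (𝒯 : RootedTreeDecomp V ι G) (t t' : ι) : Prop :=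
  t' ≠ 𝒯.root ∧ 𝒯.parent t' = t

/-- `V_t`: the union of the bags of the nodes of the subtree rooted at `t`. -/
def Vt (𝒯 : RootedTreeDecomp V ι G) (t : ι) : Set V :=
  {v | ∃ t', 𝒯.InSubtree t t' ∧ v ∈ 𝒯.bag t'}

/-- `L_t = V_t ∖ X_t`. -/
def Lt (𝒯 : RootedTreeDecomp V ι G) (t : ι) : Set V := 𝒯.Vt t \ 𝒯.bag t

/-- `R_t = V ∖ V_t`. -/
def Rt (𝒯 : RootedTreeDecomp V ι G) (t : ι) : Set V := (𝒯.Vt t)ᶜ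

/-- `L_t^S = L_t ∩ S`. -/
def LS (𝒯 : RootedTreeDecomp V ι G) (S : Set V) (t : ι) : Set V := 𝒯.Lt t ∩ S

/-- `X_t^S = X_t ∩ S`. -/
def XS (𝒯 : RootedTreeDecomp V ι G) (S : Set V) (t : ι) : Set V := 𝒯.bag t ∩ S

/-- `R_t^S = R_t ∩ S`. -/
def RS (𝒯 : RootedTreeDecomp V ι G) (S : Set V) (t : ι) : Set V := 𝒯.Rt t ∩ S

/-- The `S`-trace of a node `t`. -/
def STrace (𝒯 : RootedTreeDecomp V ι G) (S : Set V) (t : ι) : Set V × Set V × Set V :=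
  (𝒯.LS S t, 𝒯.XS S t, 𝒯.RS S t)

/-- Every bag has size at most `k + 1`, i.e. the width is at most `k`. -/
def WidthAtMost (𝒯 : RootedTreeDecomp V ι G) (k : ℕ) : Prop :=
  ∀ t : ι, (𝒯.bag t).ncard ≤ k + 1

/-- The width of the decomposition (max bag size minus one) is exactly `k`. -/
def HasWidth (𝒯 : RootedTreeDecomp V ι G) (k : ℕ) : Prop :=
  𝒯.WidthAtMost k ∧ ∃ t : ι, (𝒯.bag t).ncard = k + 1

/-- `t'` is an `S`-child of `t`. -/
def IsSChild (𝒯 : RootedTreeDecomp V ι G) (S : Set V) (t t' : ι) : Prop :=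
  𝒯.IsParent t t' ∧ ((𝒯.LS S t' ∪ 𝒯.XS S t') \ (𝒯.RS S t ∪ 𝒯.XS S t)).Nonempty

/-- `t` is an `S`-bottom node: `L_t^S ≠ ∅` and `t` is the bottom node of the
directed path of its own `S`-trace (every node with the same `S`-trace is an
ancestor of `t`). -/
def IsSBottom (𝒯 : RootedTreeDecomp V ι G) (S : Set V) (t : ι) : Prop :=
  (𝒯.LS S t).Nonempty ∧ ∀ t', 𝒯.STrace S t' = 𝒯.STrace S t → 𝒯.InSubtree t' t

/-- `t` admits the `S`-operation `introduce(v)`. -/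
def AdmitsIntroduce (𝒯 : RootedTreeDecomp V ι G) (S : Set V) (t : ι) (v : V) : Prop :=
  ∃ t₁, 𝒯.IsSChild S t t₁ ∧ (∀ t₂, 𝒯.IsSChild S t t₂ → t₂ = t₁) ∧
    v ∈ S ∧ v ∉ 𝒯.bag t₁ ∧ 𝒯.XS S t = 𝒯.XS S t₁ ∪ {v}

/-- `t` admits the `S`-operation `forget(v)`. -/
def AdmitsForget (𝒯 : RootedTreeDecomp V ι G) (S : Set V) (t : ι) (v : V) : Prop :=
  ∃ t₁, 𝒯.IsSChild S t t₁ ∧ (∀ t₂, 𝒯.IsSChild S t t₂ → t₂ = t₁) ∧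
    v ∈ S ∧ v ∈ 𝒯.bag t₁ ∧ 𝒯.XS S t = 𝒯.XS S t₁ \ {v}

/-- `t` admits the `S`-operation `join` with the two `S`-children `t₁, t₂`. -/
def AdmitsJoin (𝒯 : RootedTreeDecomp V ι G) (S : Set V) (t t₁ t₂ : ι) : Prop :=
  t₁ ≠ t₂ ∧ 𝒯.IsSChild S t t₁ ∧ 𝒯.IsSChild S t t₂ ∧
    (∀ t₃, 𝒯.IsSChild S t t₃ → t₃ = t₁ ∨ t₃ = t₂) ∧
    𝒯.XS S t₁ ∪ 𝒯.XS S t₂ ⊆ 𝒯.XS S t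

/-- `S`-nice tree decomposition: bags along tree edges are comparable and differ in
size by at most one, and every `S`-bottom node admits one of the `S`-operations. -/
def IsSNice (𝒯 : RootedTreeDecomp V ι G) (S : Set V) : Prop :=
  (∀ t t' : ι, 𝒯.IsParent t' t →
      (𝒯.bag t ⊆ 𝒯.bag t' ∨ 𝒯.bag t' ⊆ 𝒯.bag t) ∧
      (𝒯.bag t).ncard ≤ (𝒯.bag t').ncard + 1 ∧ (𝒯.bag t').ncard ≤ (𝒯.bag t).ncard + 1) ∧
  ∀ t : ι, 𝒯.IsSBottom S t →
    (∃ v, 𝒯.AdmitsIntroduce S t v) ∨ (∃ v, 𝒯.AdmitsForget S t v) ∨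
      (∃ t₁ t₂, 𝒯.AdmitsJoin S t t₁ t₂)

/-- Nice tree decomposition: root and leaves have empty bags, and every internal
node is an introduce, forget, or join node. -/
def IsNice (𝒯 : RootedTreeDecomp V ι G) : Prop :=
  𝒯.bag 𝒯.root = ∅ ∧
  (∀ t : ι, (∀ t', ¬𝒯.IsParent t t') → 𝒯.bag t = ∅) ∧
  ∀ t : ι, (∃ t', 𝒯.IsParent t t') →
    (∃ t', 𝒯.IsParent t t' ∧ (∀ t'', 𝒯.IsParent t t'' → t'' = t') ∧
      ((∃ v, v ∉ 𝒯.bag t' ∧ 𝒯.bag t = 𝒯.bag t' ∪ {v}) ∨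
        (∃ v, v ∈ 𝒯.bag t' ∧ 𝒯.bag t = 𝒯.bag t' \ {v}))) ∨
    (∃ t₁ t₂, t₁ ≠ t₂ ∧ 𝒯.IsParent t t₁ ∧ 𝒯.IsParent t t₂ ∧
      (∀ t₃, 𝒯.IsParent t t₃ → t₃ = t₁ ∨ t₃ = t₂) ∧
      𝒯.bag t = 𝒯.bag t₁ ∧ 𝒯.bag t = 𝒯.bag t₂)

/-- A set of nodes inducing a connected subtree of the tree: it contains a node `m`
such that from every node of the set the whole ancestor chain up to `m` stays in
the set. -/
def ConnectedNodeSet (𝒯 : RootedTreeDecomp V ι G) (A : Set ι) : Prop :=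
  ∃ m ∈ A, ∀ t ∈ A, ∃ n : ℕ, 𝒯.parent^[n] t = m ∧ ∀ i ≤ n, 𝒯.parent^[i] t ∈ A

/-- A full join tree: a non-trivial inclusion-maximal connected set of nodes all of
which share one and the same full bag `X` (of size `k + 1`). -/
def IsFullJoinTree (𝒯 : RootedTreeDecomp V ι G) (k : ℕ) (A : Set ι) (X : Set V) : Prop :=
  A.Nontrivial ∧ 𝒯.ConnectedNodeSet A ∧ X.ncard = k + 1 ∧ (∀ t ∈ A, 𝒯.bag t = X) ∧
  ∀ A' : Set ι, A ⊆ A' → 𝒯.ConnectedNodeSet A' → (∀ t ∈ A', 𝒯.bag t = X) → A' = A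

/-- `m` is the root (top node) of the node set `A`. -/
def IsTopOf (𝒯 : RootedTreeDecomp V ι G) (A : Set ι) (m : ι) : Prop :=
  m ∈ A ∧ ∀ t ∈ A, 𝒯.InSubtree m t

/-- The condition on a pair `(u, ti)` appearing in condition (7) of slimness:
either `ti` belongs to `T'_C` (it is an `S`-child of a node of the full join tree
`A` but is not itself in `A`) and `u ∈ V_{ti}`, or `ti` is the parent of the root
`tr` of the full join tree and `u ∈ V ∖ V_{tr}`. -/
def FullJoinBranch (𝒯 : RootedTreeDecomp V ι G) (S : Set V) (A : Set ι) (tr : ι)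
    (u : V) (ti : ι) : Prop :=
  (ti ∉ A ∧ (∃ ta ∈ A, 𝒯.IsSChild S ta ti) ∧ u ∈ 𝒯.Vt ti) ∨
  (tr ≠ 𝒯.root ∧ ti = 𝒯.parent tr ∧ u ∉ 𝒯.Vt tr)

/-- Slim `S`-nice tree decomposition of width `k` (the seven conditions of the
paper; a bag is *full* if it has size `k + 1`). -/
def IsSlim (𝒯 : RootedTreeDecomp V ι G) (S : Set V) (k : ℕ) : Prop :=
  -- (1) the root is not an S-bottom node
  (¬𝒯.IsSBottom S 𝒯.root) ∧
  -- (2) S-bottom nodes with two S-children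
  (∀ t t₁ t₂ : ι, 𝒯.IsSBottom S t → t₁ ≠ t₂ → 𝒯.IsSChild S t t₁ → 𝒯.IsSChild S t t₂ →
    (∃ A X, 𝒯.IsFullJoinTree k A X ∧ t ∈ A) ∨
      ((𝒯.bag t₁).ncard ≠ k + 1 ∧ (𝒯.bag t₂).ncard ≠ k + 1 ∧
        (𝒯.bag t₁).ncard ≤ (𝒯.bag t).ncard ∧ (𝒯.bag t₂).ncard ≤ (𝒯.bag t).ncard ∧
        ∀ tp, 𝒯.IsParent tp t →
          (𝒯.bag tp).ncard ≠ k + 1 ∧ (𝒯.bag tp).ncard ≤ (𝒯.bag t).ncard)) ∧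
  -- (3) S-bottom nodes with a non-full bag
  (∀ t tp : ι, 𝒯.IsSBottom S t → (𝒯.bag t).ncard ≠ k + 1 → 𝒯.IsParent tp t →
    𝒯.bag t = 𝒯.bag tp ∧ ∀ t'', 𝒯.IsSChild S tp t'' → t'' = t) ∧
  -- (4) S-bottom nodes admitting forget(v)
  (∀ t v t', 𝒯.IsSBottom S t → 𝒯.AdmitsForget S t v → 𝒯.IsSChild S t t' →
    (𝒯.bag t').ncard ≠ k + 1 →
    (∀ t₁ t₂, 𝒯.IsSChild S t' t₁ → 𝒯.IsSChild S t' t₂ → t₁ = t₂) ∧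
      ∀ t'', 𝒯.IsSChild S t' t'' → 𝒯.bag t' = 𝒯.bag t'') ∧
  -- (5) parents of S-bottom nodes with non-full bags
  (∀ t tp, 𝒯.IsSBottom S t → 𝒯.IsParent tp t → (𝒯.bag tp).ncard ≠ k + 1 →
    tp = 𝒯.root ∨ ∀ tpp, 𝒯.IsParent tpp tp → ¬𝒯.IsSBottom S tpp) ∧
  -- (6) nodes of full join trees
  (∀ A X, 𝒯.IsFullJoinTree k A X → ∀ t ∈ A,
    𝒯.IsSBottom S t ∧ ∃ t₁ t₂, t₁ ≠ t₂ ∧ 𝒯.IsSChild S t t₁ ∧ 𝒯.IsSChild S t t₂) ∧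
  -- (7) branching condition of full join trees
  (∀ A X tr, 𝒯.IsFullJoinTree k A X → 𝒯.IsTopOf A tr →
    ∀ v ∈ X \ S, ∃ u₁ u₂ u₃ : V, ∃ t₁ t₂ t₃ : ι,
      u₁ ≠ u₂ ∧ u₁ ≠ u₃ ∧ u₂ ≠ u₃ ∧ t₁ ≠ t₂ ∧ t₁ ≠ t₃ ∧ t₂ ≠ t₃ ∧
      (G.Adj v u₁ ∧ u₁ ∉ X ∧ (∃ s ∈ S, G.ReachableIn Xᶜ u₁ s) ∧
        𝒯.FullJoinBranch S A tr u₁ t₁) ∧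
      (G.Adj v u₂ ∧ u₂ ∉ X ∧ (∃ s ∈ S, G.ReachableIn Xᶜ u₂ s) ∧
        𝒯.FullJoinBranch S A tr u₂ t₂) ∧
      (G.Adj v u₃ ∧ u₃ ∉ X ∧ (∃ s ∈ S, G.ReachableIn Xᶜ u₃ s) ∧
        𝒯.FullJoinBranch S A tr u₃ t₃))

end RootedTreeDecomp

/-- `tw(G) ≤ k`: `G` admits a (rooted) tree decomposition of width at most `k`. -/
def SimpleGraph.TreewidthAtMost {V : Type} (G : SimpleGraph V) (k : ℕ) : Prop :=
  ∃ (ι : Type) (𝒯 : RootedTreeDecomp V ι G), 𝒯.WidthAtMost k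

/-!
The sets of a bramble (pairwise touching connected vertex sets) occupy pairwise intersecting
subtrees of a tree decomposition, so by the Helly property of subtrees some bag meets all of them;
if the sets are moreover disjoint, this bag is at least as large as the bramble. The theorem
follows from the bramble consisting of the singletons of the clique `K`, the set `B`, and the
component of `G − (K ∪ B)` that contains `A`: that component touches `B` because a path from `A` to
`B` avoiding `K` can leave it only into `B`.
-/

theorem reachableIn_of_connected_induce {V : Type} {G : SimpleGraph V} {W : Set V}
    (hW : (G.induce W).Connected) {u v : V} (hu : u ∈ W) (hv : v ∈ W) : G.ReachableIn W u v := by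
  obtain ⟨p⟩ := hW.preconnected ⟨u, hu⟩ ⟨v, hv⟩
  refine ⟨p.map (SimpleGraph.Embedding.induce W).toHom, fun x hx => ?_⟩
  obtain ⟨y, -, rfl⟩ := List.mem_map.1 (SimpleGraph.Walk.support_map _ p ▸ hx)
  exact y.2

section CompOutside

variable {V : Type} {G : SimpleGraph V} {X : Set V} {a : V}

theorem disjoint_compOutside (G : SimpleGraph V) (X : Set V) (a : V) :
    Disjoint (G.compOutside X a) X :=
  Set.disjoint_left.2 fun v ⟨p, hp⟩ => hp v p.end_mem_support

theorem subset_compOutside {A : Set V} (hA : (G.induce A).Connected) (hAX : Disjoint A X)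
    (ha : a ∈ A) : A ⊆ G.compOutside X a := by
  intro v hv
  obtain ⟨p, hp⟩ := reachableIn_of_connected_induce hA ha hv
  exact ⟨p, fun x hx => Set.disjoint_left.1 hAX (hp x hx)⟩

theorem self_mem_compOutside (ha : a ∉ X) : a ∈ G.compOutside X a :=
  ⟨.nil, fun x hx => by rwa [List.mem_singleton.1 hx]⟩

theorem connected_induce_compOutside (ha : a ∉ X) : (G.induce (G.compOutside X a)).Connected := by
  classical
  refine SimpleGraph.induce_connected_of_patches a (self_mem_compOutside ha) ?_
  rintro v ⟨p, hp⟩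
  have hsupport : {x | x ∈ p.support} ⊆ G.compOutside X a := fun x hx =>
    ⟨p.takeUntil x hx, fun y hy => hp y (p.support_takeUntil_subset_support hx hy)⟩
  exact ⟨_, hsupport, p.start_mem_support, p.end_mem_support,
    p.connected_induce_support.preconnected _ _⟩

theorem mem_compOutside_of_adj {x y : V} (hx : x ∈ G.compOutside X a) (hxy : G.Adj x y)
    (hy : y ∉ X) : y ∈ G.compOutside X a := by
  obtain ⟨p, hp⟩ := hx
  refine ⟨p.concat hxy, fun z hz => ?_⟩
  rw [SimpleGraph.Walk.support_concat, List.mem_append, List.mem_singleton] at hz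
  obtain hz | rfl := hz
  · exact hp z hz
  · exact hy

theorem exists_adj_compOutside_of_reachableIn {K B : Set V} {b : V} (ha : a ∉ K ∪ B) (hb : b ∈ B)
    (h : G.ReachableIn Kᶜ a b) : ∃ x ∈ G.compOutside (K ∪ B) a, ∃ y ∈ B, G.Adj x y := by
  obtain ⟨p, hp⟩ := h
  have hbC : b ∉ G.compOutside (K ∪ B) a :=
    Set.disjoint_right.1 (disjoint_compOutside G (K ∪ B) a) (.inr hb)
  obtain ⟨d, hd, hx, hy⟩ := p.exists_boundary_dart _ (self_mem_compOutside ha) hbC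
  have hyKB : d.snd ∈ K ∪ B := not_not.1 fun hyX => hy (mem_compOutside_of_adj hx d.adj hyX)
  have hyK : d.snd ∉ K := hp _ (p.dart_snd_mem_support_of_mem_darts hd)
  exact ⟨d.fst, hx, d.snd, hyKB.resolve_left hyK, d.adj⟩

end CompOutside

/-- Two vertex sets touch if they share a vertex or are joined by an edge. -/
def Touches {V : Type*} (G : SimpleGraph V) (U W : Set V) : Prop :=
  (U ∩ W).Nonempty ∨ ∃ u ∈ U, ∃ w ∈ W, G.Adj u w

/-- A bramble: a family of connected vertex sets that pairwise touch. It is indexed, so that its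
size is the cardinality of the index type. -/
structure IsBramble {V J : Type*} (G : SimpleGraph V) (F : J → Set V) : Prop where
  connected : ∀ j, (G.induce (F j)).Connected
  touches : Pairwise fun i j => Touches G (F i) (F j)

section Bramble

variable {V J : Type*} {G : SimpleGraph V} {F : J → Set V} {U W : Set V}

theorem Touches.symm (h : Touches G U W) : Touches G W U := by
  obtain h | ⟨u, hu, w, hw, huw⟩ := h
  · exact .inl (Set.inter_comm U W ▸ h)
  · exact .inr ⟨w, hw, u, hu, huw.symm⟩

theorem IsBramble.option_elim (hF : IsBramble G F) (hU : (G.induce U).Connected)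
    (h : ∀ j, Touches G U (F j)) : IsBramble G fun o : Option J => o.elim U F where
  connected
    | none => hU
    | some j => hF.connected j
  touches
    | none, none, hne => absurd rfl hne
    | none, some j, _ => h j
    | some j, none, _ => (h j).symm
    | some _, some _, hne => hF.touches (ne_of_apply_ne some hne)

theorem pairwise_disjoint_option_elim (hF : Pairwise fun i j => Disjoint (F i) (F j))
    (h : ∀ j, Disjoint U (F j)) :
    Pairwise fun o o' : Option J => Disjoint (o.elim U F) (o'.elim U F)
  | none, none, hne => absurd rfl hne
  | none, some j, _ => h j
  | some j, none, _ => (h j).symm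
  | some _, some _, hne => hF (ne_of_apply_ne some hne)

theorem isBramble_singleton_of_isClique {K : Set V} (hK : G.IsClique K) :
    IsBramble G fun v : K => {v.1} where
  connected _ := .of_subsingleton
  touches u v huv := .inr ⟨u, rfl, v, rfl, hK u.2 v.2 (Subtype.coe_ne_coe.2 huv)⟩

end Bramble

namespace RootedTreeDecomp

variable {V ι : Type} {G : SimpleGraph V} (𝒯 : RootedTreeDecomp V ι G)

/-- The distance from a node to the root of the decomposition tree. -/
noncomputable def depth (t : ι) : ℕ := sInf {n | 𝒯.parent^[n] t = 𝒯.root}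

/-- The set of nodes whose bag meets the vertex set `W`. -/
def nodesMeeting (W : Set V) : Set ι := {t | (𝒯.bag t ∩ W).Nonempty}

section Ancestors

variable {𝒯} {m s t : ι}

theorem iterate_parent_depth (t : ι) : 𝒯.parent^[𝒯.depth t] t = 𝒯.root :=
  Nat.sInf_mem (𝒯.reaches_root t)

theorem depth_le_of_iterate_eq_root {n : ℕ} (h : 𝒯.parent^[n] t = 𝒯.root) : 𝒯.depth t ≤ n :=
  Nat.sInf_le h

theorem eq_root_of_depth_eq_zero (h : 𝒯.depth t = 0) : t = 𝒯.root := by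
  simpa only [h, Function.iterate_zero_apply] using 𝒯.iterate_parent_depth t

/- At the root the subtraction truncates, in accordance with `parent root = root`. -/
theorem depth_parent (t : ι) : 𝒯.depth (𝒯.parent t) = 𝒯.depth t - 1 := by
  have lower : 𝒯.depth t ≤ 𝒯.depth (𝒯.parent t) + 1 :=
    depth_le_of_iterate_eq_root (𝒯.iterate_parent_depth (𝒯.parent t))
  have upper : 𝒯.depth (𝒯.parent t) ≤ 𝒯.depth t - 1 := by
    apply depth_le_of_iterate_eq_root
    have hroot := 𝒯.iterate_parent_depth t
    cases hd : 𝒯.depth t with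
    | zero => simp [eq_root_of_depth_eq_zero hd, 𝒯.parent_root]
    | succ d => rwa [hd] at hroot
  omega

theorem depth_iterate_parent (n : ℕ) (t : ι) : 𝒯.depth (𝒯.parent^[n] t) = 𝒯.depth t - n := by
  induction n with
  | zero => rfl
  | succ n ih => rw [Function.iterate_succ_apply', depth_parent, ih, Nat.sub_sub]

theorem InSubtree.trans (hms : 𝒯.InSubtree m s) (hst : 𝒯.InSubtree s t) : 𝒯.InSubtree m t := by
  obtain ⟨a, rfl⟩ := hms
  obtain ⟨b, rfl⟩ := hst
  exact ⟨a + b, Function.iterate_add_apply ..⟩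

theorem InSubtree.depth_le (h : 𝒯.InSubtree s t) : 𝒯.depth s ≤ 𝒯.depth t := by
  obtain ⟨n, rfl⟩ := h
  exact (𝒯.depth_iterate_parent n t).trans_le (Nat.sub_le _ _)

theorem InSubtree.eq_of_depth_le (h : 𝒯.InSubtree s t) (hd : 𝒯.depth t ≤ 𝒯.depth s) : s = t := by
  obtain ⟨n, rfl⟩ := h
  rw [depth_iterate_parent] at hd
  obtain hn | ht : n = 0 ∨ 𝒯.depth t = 0 := by omega
  · rw [hn, Function.iterate_zero_apply]
  · rw [eq_root_of_depth_eq_zero ht, Function.iterate_fixed 𝒯.parent_root]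

theorem InSubtree.antisymm (hst : 𝒯.InSubtree s t) (hts : 𝒯.InSubtree t s) : s = t :=
  hst.eq_of_depth_le hts.depth_le

theorem inSubtree_iterate_parent {i n : ℕ} (h : i ≤ n) (t : ι) :
    𝒯.InSubtree (𝒯.parent^[n] t) (𝒯.parent^[i] t) :=
  ⟨n - i, by rw [← Function.iterate_add_apply, Nat.sub_add_cancel h]⟩

theorem InSubtree.total (hs : 𝒯.InSubtree s t) (hm : 𝒯.InSubtree m t) :
    𝒯.InSubtree s m ∨ 𝒯.InSubtree m s := by
  obtain ⟨a, rfl⟩ := hs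
  obtain ⟨b, rfl⟩ := hm
  exact (le_total b a).imp (inSubtree_iterate_parent · t) (inSubtree_iterate_parent · t)

end Ancestors

section Subtrees

variable {𝒯} {S₁ S₂ : Set ι}

/- In the ancestor order, the right-hand side says that `S` has a least element and is
order-convex. -/
theorem connectedNodeSet_iff_exists_isTopOf {S : Set ι} :
    𝒯.ConnectedNodeSet S ↔ ∃ m, 𝒯.IsTopOf S m ∧
      ∀ t ∈ S, ∀ s, 𝒯.InSubtree m s → 𝒯.InSubtree s t → s ∈ S := by
  constructor
  · rintro ⟨m, hm, hchain⟩
    refine ⟨m, ⟨hm, fun t ht => (hchain t ht).imp fun _ => And.left⟩, ?_⟩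
    rintro t ht _ hms ⟨i, rfl⟩
    obtain ⟨n, rfl, hS⟩ := hchain t ht
    obtain hin | hni := le_total i n
    · exact hS i hin
    · rwa [(inSubtree_iterate_parent hni t).antisymm hms]
  · rintro ⟨m, ⟨hm, htop⟩, hconvex⟩
    refine ⟨m, hm, fun t ht => ?_⟩
    obtain ⟨n, rfl⟩ := htop t ht
    exact ⟨n, rfl, fun i hi => hconvex t ht _ (inSubtree_iterate_parent hi t) ⟨i, rfl⟩⟩

theorem ConnectedNodeSet.union (h₁ : 𝒯.ConnectedNodeSet S₁) (h₂ : 𝒯.ConnectedNodeSet S₂)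
    (h : (S₁ ∩ S₂).Nonempty) : 𝒯.ConnectedNodeSet (S₁ ∪ S₂) := by
  simp only [connectedNodeSet_iff_exists_isTopOf] at *
  obtain ⟨t, ht₁, ht₂⟩ := h
  obtain ⟨m₁, ⟨hm₁, htop₁⟩, hconvex₁⟩ := h₁
  obtain ⟨m₂, ⟨hm₂, htop₂⟩, hconvex₂⟩ := h₂
  wlog hm : 𝒯.InSubtree m₁ m₂ generalizing S₁ S₂ m₁ m₂
  · rw [Set.union_comm]
    exact this ht₂ ht₁ m₂ hconvex₂ hm₂ htop₂ m₁ hconvex₁ hm₁ htop₁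
      (((htop₁ t ht₁).total (htop₂ t ht₂)).resolve_left hm)
  refine ⟨m₁, ⟨.inl hm₁, ?_⟩, ?_⟩
  · rintro s (hs | hs)
    · exact htop₁ s hs
    · exact hm.trans (htop₂ s hs)
  · rintro r (hr | hr) s hms hsr
    · exact .inl (hconvex₁ r hr s hms hsr)
    · obtain hs | hs := hsr.total (htop₂ r hr)
      · exact .inl (hconvex₁ t ht₁ s hms (hs.trans (htop₂ t ht₂)))
      · exact .inr (hconvex₂ r hr s hs hsr)

theorem connectedNodeSet_of_forall_pair {S : Set ι} (hne : S.Nonempty)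
    (h : ∀ s ∈ S, ∀ t ∈ S, ∃ S' ⊆ S, s ∈ S' ∧ t ∈ S' ∧ 𝒯.ConnectedNodeSet S') :
    𝒯.ConnectedNodeSet S := by
  simp only [connectedNodeSet_iff_exists_isTopOf] at *
  obtain ⟨m, hm, hmin⟩ := exists_minimalFor_of_wellFoundedLT (· ∈ S) 𝒯.depth hne
  have hpair : ∀ t ∈ S, ∃ S' ⊆ S, t ∈ S' ∧ 𝒯.IsTopOf S' m ∧
      ∀ r ∈ S', ∀ s, 𝒯.InSubtree m s → 𝒯.InSubtree s r → s ∈ S' := by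
    intro t ht
    obtain ⟨S', hS', hmS', htS', m', htop, hconvex⟩ := h m hm t ht
    have hm'm : 𝒯.InSubtree m' m := htop.2 m hmS'
    obtain rfl : m' = m := hm'm.eq_of_depth_le (hmin (hS' htop.1) hm'm.depth_le)
    exact ⟨S', hS', htS', htop, hconvex⟩
  refine ⟨m, ⟨hm, fun t ht => ?_⟩, fun t ht s hms hst => ?_⟩
  · obtain ⟨S', -, htS', htop, -⟩ := hpair t ht
    exact htop.2 t htS'
  · obtain ⟨S', hS', htS', -, hconvex⟩ := hpair t ht
    exact hS' (hconvex t htS' s hms hst)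

/- Helly property: the deepest of the top nodes lies in every set. -/
theorem nonempty_iInter_of_pairwise_inter {J : Type*} [Finite J] [Nonempty J] {S : J → Set ι}
    (hS : ∀ j, 𝒯.ConnectedNodeSet (S j)) (hinter : Pairwise fun i j => (S i ∩ S j).Nonempty) :
    (⋂ j, S j).Nonempty := by
  simp only [connectedNodeSet_iff_exists_isTopOf] at hS
  choose m htop hconvex using hS
  obtain ⟨i, hdeepest⟩ := Finite.exists_max (𝒯.depth ∘ m)
  refine ⟨m i, Set.mem_iInter.2 fun j => ?_⟩
  obtain rfl | hij := eq_or_ne i j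
  · exact (htop i).1
  obtain ⟨t, hti, htj⟩ := hinter hij
  have hmi : 𝒯.InSubtree (m i) t := (htop i).2 t hti
  obtain hle | hle := hmi.total ((htop j).2 t htj)
  · rw [hle.eq_of_depth_le (hdeepest j)]
    exact (htop j).1
  · exact hconvex j t htj (m i) hle hmi

end Subtrees

section NodesMeeting

theorem nodesMeeting_mono {U W : Set V} (h : U ⊆ W) : 𝒯.nodesMeeting U ⊆ 𝒯.nodesMeeting W :=
  fun _ ht => ht.mono (Set.inter_subset_inter_right _ h)

theorem nodesMeeting_union (U W : Set V) :
    𝒯.nodesMeeting (U ∪ W) = 𝒯.nodesMeeting U ∪ 𝒯.nodesMeeting W := by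
  ext t
  simp only [nodesMeeting, Set.mem_ofPred_eq, Set.inter_union_distrib_left, Set.union_nonempty,
    Set.mem_union]

theorem nodesMeeting_nonempty {W : Set V} (hW : W.Nonempty) : (𝒯.nodesMeeting W).Nonempty := by
  obtain ⟨w, hw⟩ := hW
  exact (𝒯.bags_cover w).imp fun _ ht => ⟨w, ht, hw⟩

theorem nodesMeeting_inter_nonempty_of_touches {U W : Set V} (h : Touches G U W) :
    (𝒯.nodesMeeting U ∩ 𝒯.nodesMeeting W).Nonempty := by
  obtain ⟨v, hU, hW⟩ | ⟨u, hu, w, hw, huw⟩ := h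
  · exact (𝒯.bags_cover v).imp fun _ ht => ⟨⟨v, ht, hU⟩, ⟨v, ht, hW⟩⟩
  · exact (𝒯.bags_of_edges huw).imp fun _ ht => ⟨⟨u, ht.1, hu⟩, ⟨w, ht.2, hw⟩⟩

theorem connectedNodeSet_nodesMeeting_singleton (v : V) :
    𝒯.ConnectedNodeSet (𝒯.nodesMeeting {v}) := by
  simpa only [ConnectedNodeSet, nodesMeeting, Set.inter_singleton_nonempty, Set.mem_ofPred_eq]
    using 𝒯.bags_connected v

theorem connectedNodeSet_nodesMeeting_support {u v : V} (p : G.Walk u v) :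
    𝒯.ConnectedNodeSet (𝒯.nodesMeeting {x | x ∈ p.support}) := by
  induction p with
  | @nil u =>
    simpa only [SimpleGraph.Walk.support_nil, List.mem_singleton, Set.ofPred_eq_eq_singleton]
      using 𝒯.connectedNodeSet_nodesMeeting_singleton u
  | @cons u w v h p ih =>
    have hsupport : {x | x ∈ (p.cons h).support} = {u} ∪ {x | x ∈ p.support} := by
      ext x
      simp only [SimpleGraph.Walk.support_cons, List.mem_cons, Set.mem_ofPred_eq, Set.mem_union,
        Set.mem_singleton_iff]
    rw [hsupport, nodesMeeting_union]
    exact (𝒯.connectedNodeSet_nodesMeeting_singleton u).union ih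
      (𝒯.nodesMeeting_inter_nonempty_of_touches (.inr ⟨u, rfl, w, p.start_mem_support, h⟩))

theorem connectedNodeSet_nodesMeeting {W : Set V} (hW : (G.induce W).Connected) :
    𝒯.ConnectedNodeSet (𝒯.nodesMeeting W) := by
  refine connectedNodeSet_of_forall_pair
    (𝒯.nodesMeeting_nonempty (Set.nonempty_coe_sort.1 hW.nonempty)) ?_
  rintro s ⟨u, hus, hu⟩ t ⟨v, hvt, hv⟩
  obtain ⟨p, hp⟩ := reachableIn_of_connected_induce hW hu hv
  exact ⟨_, 𝒯.nodesMeeting_mono hp, ⟨u, hus, p.start_mem_support⟩, ⟨v, hvt, p.end_mem_support⟩,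
    𝒯.connectedNodeSet_nodesMeeting_support p⟩

end NodesMeeting

section Brambles

variable {J : Type*} [Finite J] [Nonempty J] {F : J → Set V}

theorem exists_bag_inter_nonempty_of_isBramble (hF : IsBramble G F) :
    ∃ t, ∀ j, (𝒯.bag t ∩ F j).Nonempty :=
  (nonempty_iInter_of_pairwise_inter
    (fun j => 𝒯.connectedNodeSet_nodesMeeting (hF.connected j))
    fun _ _ hij => 𝒯.nodesMeeting_inter_nonempty_of_touches (hF.touches hij)).imp
    fun _ => Set.mem_iInter.1

theorem exists_card_le_encard_bag (hF : IsBramble G F)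
    (hdisj : Pairwise fun i j => Disjoint (F i) (F j)) :
    ∃ t, (Nat.card J : ℕ∞) ≤ (𝒯.bag t).encard := by
  obtain ⟨t, ht⟩ := 𝒯.exists_bag_inter_nonempty_of_isBramble hF
  choose f hbag hf using ht
  have hinj : Function.Injective f := fun i j hij =>
    hdisj.eq (Set.not_disjoint_iff.2 ⟨f i, hf i, hij ▸ hf j⟩)
  refine ⟨t, ?_⟩
  calc (Nat.card J : ℕ∞) = ENat.card J := (ENat.card_eq_coe_natCard J).symm
    _ ≤ (Set.range f).encard := hinj.encard_range
    _ ≤ (𝒯.bag t).encard := Set.encard_le_encard (Set.range_subset_iff.2 hbag)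

end Brambles

theorem exists_encard_add_two_le_encard_bag {K U W : Set V} (hfin : K.Finite) (hK : G.IsClique K)
    (hU : (G.induce U).Connected) (hW : (G.induce W).Connected)
    (hUW : Disjoint U W) (hUK : Disjoint U K) (hWK : Disjoint W K)
    (hUW' : ∃ u ∈ U, ∃ w ∈ W, G.Adj u w)
    (hKU : ∀ v ∈ K, ∃ u ∈ U, G.Adj v u) (hKW : ∀ v ∈ K, ∃ w ∈ W, G.Adj v w) :
    ∃ t, K.encard + 2 ≤ (𝒯.bag t).encard := by
  have touches_vertex {S : Set V} (hKS : ∀ v ∈ K, ∃ s ∈ S, G.Adj v s) (v : K) :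
      Touches G S {v.1} :=
    Touches.symm (.inr ⟨v, rfl, hKS v v.2⟩)
  have disjoint_vertex {S : Set V} (hSK : Disjoint S K) (v : K) : Disjoint S {v.1} :=
    hSK.mono_right (Set.singleton_subset_iff.2 v.2)
  have disjoint_vertices : Pairwise fun u v : K => Disjoint ({u.1} : Set V) {v.1} :=
    fun _ _ huv => Set.disjoint_singleton.2 (Subtype.coe_ne_coe.2 huv)
  have hbramble := ((isBramble_singleton_of_isClique hK).option_elim hW
    (touches_vertex hKW)).option_elim hU (Option.forall.2 ⟨.inr hUW', touches_vertex hKU⟩)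
  have hdisj := pairwise_disjoint_option_elim
    (pairwise_disjoint_option_elim disjoint_vertices (disjoint_vertex hWK))
    (Option.forall.2 ⟨hUW, disjoint_vertex hUK⟩)
  have := hfin.to_subtype
  obtain ⟨t, ht⟩ := 𝒯.exists_card_le_encard_bag hbramble hdisj
  rw [Finite.card_option, Finite.card_option, Nat.card_coe_set_eq] at ht
  exact ⟨t, by rwa [← hfin.cast_ncard_eq]⟩

end RootedTreeDecomp

theorem statement14_general {V ι : Type} {G : SimpleGraph V} (𝒯 : RootedTreeDecomp V ι G)
    {K A B : Set V} (hfin : K.Finite) (hK : G.IsClique K)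
    (hAB : Disjoint A B) (hAK : Disjoint A K) (hBK : Disjoint B K)
    (hA : (G.induce A).Connected) (hB : (G.induce B).Connected)
    (hKA : ∀ v ∈ K, ∃ a ∈ A, G.Adj v a) (hKB : ∀ v ∈ K, ∃ b ∈ B, G.Adj v b)
    (hsame : ∃ a ∈ A, ∃ b ∈ B, G.ReachableIn Kᶜ a b) :
    ∃ t, K.encard + 2 ≤ (𝒯.bag t).encard := by
  obtain ⟨a, ha, b, hb, hab⟩ := hsame
  have hAX : Disjoint A (K ∪ B) := Set.disjoint_union_right.2 ⟨hAK, hAB⟩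
  have haX : a ∉ K ∪ B := Set.disjoint_left.1 hAX ha
  have hAC : A ⊆ G.compOutside (K ∪ B) a := subset_compOutside hA hAX ha
  obtain ⟨hCK, hCB⟩ := Set.disjoint_union_right.1 (disjoint_compOutside G (K ∪ B) a)
  exact 𝒯.exists_encard_add_two_le_encard_bag hfin hK (connected_induce_compOutside haX) hB
    hCB hCK hBK (exists_adj_compOutside_of_reachableIn haX hb hab)
    (fun v hv => (hKA v hv).imp fun _ h => ⟨hAC h.1, h.2⟩) hKB

/-- If `G[K]` is complete and `A, B` are disjoint nonempty
connected subsets of `V ∖ K` such that every vertex of `K` has a neighbor in `A`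
and a neighbor in `B`, and `A` and `B` lie in the same connected component of
`G − K`, then `tw(G) ≥ |K| + 1`. -/
theorem statement14 {V : Type} [Fintype V] [DecidableEq V] (G : SimpleGraph V)
    (K A B : Set V)
    (hcomplete : ∀ u ∈ K, ∀ v ∈ K, u ≠ v → G.Adj u v)
    (hA : A.Nonempty) (hB : B.Nonempty) (hAB : Disjoint A B)
    (hAK : Disjoint A K) (hBK : Disjoint B K)
    (hAconn : (G.induce A).Connected) (hBconn : (G.induce B).Connected)
    (hKA : ∀ v ∈ K, ∃ a ∈ A, G.Adj v a)
    (hKB : ∀ v ∈ K, ∃ b ∈ B, G.Adj v b)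
    (hsame : ∃ a ∈ A, ∃ b ∈ B, G.ReachableIn Kᶜ a b) :
    ¬G.TreewidthAtMost K.ncard := by
  rintro ⟨ι, 𝒯, hw⟩
  obtain ⟨t, ht⟩ := statement14_general 𝒯 K.toFinite (fun u hu v hv => hcomplete u hu v hv)
    hAB hAK hBK hAconn hBconn hKA hKB hsame
  rw [← K.toFinite.cast_ncard_eq, ← (𝒯.bag t).toFinite.cast_ncard_eq] at ht
  exact absurd (hw t) (by norm_cast at ht; omega)
end

section
/- Let G=(V,E) be a connected graph, let S ⊆ V, and let 𝒯 be a slim S-nice tree decomposition of G of width k. Let (L^S, X^S, R^S) be an S-trace with L^S ≠ ∅ that occurs in 𝒯, with directed path from the top node t_max to the bottom node t_min; assume t_max has a parent t_p. Write X_max = X_{t_max}, X_p = X_{t_p}, X_min = X_{t_min}, and let X_c be the union of the bags of the S-children of t_min. Assume that every connected component C of G − X_min with V(C) ∩ S = ∅ satisfies V(C) ∩ V_t = ∅ for every S-child t of t_min, and that every connected component C of G − X_p with V(C) ∩ S = ∅ satisfies V(C) ∩ V_t = ∅ for every S-child t of t_p. Let X_path be the union of the vertex sets of the connected components C of G − (X_max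 ∪ X_p ∪ X_min) with V(C) ∩ S = ∅, N[V(C)] ∩ (X_c ∖ X_min) = ∅ and N(V(C)) ∖ X_p ≠ ∅, and set V_X = X_max ∪ X_p ∪ X_min ∪ X_path. Then for every vertex v ∈ V: v ∈ V_X if and only if v ∈ X_p, or both v ∈ V_{t_max} and v ∉ V_t ∖ X_min for every S-child t of t_min. -/
/-! Removing the adhesion `X_t ∩ X_{parent t}` separates `V_t` from the rest of `G`. Hence each
component `C` of `G − Y`, with `Y = X_max ∪ X_p ∪ X_min`, lies inside or outside `V_{t_max}`, and
inside or outside `V_c` for each child `c` of `t_min`. If `C` lies in `V_{t_max}` and misses all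
`V_c` with `c` an `S`-child of `t_min`, then `C` has no vertex in `S`, because the equality
`L_max^S = L_min^S` places every vertex of `S ∩ C` in such a `V_c`. The two assumptions on
`S`-free components enter through one observation: a component of `G − Y` whose neighborhood is
contained in `X` contains every component of `G − X` that it meets. With `X = X_p` this shows that
`C` has a neighbor outside `X_p`; with `X = X_min` it shows that a component in `X_path` misses
every `V_c`. -/

section Components

variable {V : Type} {G : SimpleGraph V} {X Y : Set V} {u v w : V}

theorem mem_compOutside_self (hv : v ∉ X) : v ∈ G.compOutside X v :=
  ⟨.nil, fun x hx => by rwa [SimpleGraph.Walk.mem_support_nil_iff.mp hx]⟩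

theorem mem_compOutside_symm (h : w ∈ G.compOutside X v) : v ∈ G.compOutside X w :=
  let ⟨p, hp⟩ := h
  ⟨p.reverse, fun x hx => hp x (List.mem_reverse.mp (p.support_reverse ▸ hx))⟩

theorem notMem_of_mem_compOutside (h : w ∈ G.compOutside X v) : w ∉ X :=
  let ⟨p, hp⟩ := h
  hp w p.end_mem_support

theorem mem_compOutside_of_adj_s16 (hu : u ∈ G.compOutside X v) (huw : G.Adj u w) (hw : w ∉ X) :
    w ∈ G.compOutside X v := by
  obtain ⟨p, hp⟩ := hu
  refine ⟨p.concat huw, fun x hx => ?_⟩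
  rw [SimpleGraph.Walk.support_concat, List.mem_append, List.mem_singleton] at hx
  rcases hx with hx | rfl
  exacts [hp x hx, hw]

theorem compOutside_subset_of_adj_closed {P : Set V} (hv : v ∈ P)
    (hP : ∀ ⦃a b⦄, a ∉ X → b ∉ X → G.Adj a b → a ∈ P → b ∈ P) : G.compOutside X v ⊆ P := by
  rintro w ⟨p, hp⟩
  induction p with
  | nil => exact hv
  | cons hadj q ih =>
    simp only [SimpleGraph.Walk.support_cons, List.forall_mem_cons] at hp
    exact ih (hP hp.1 (hp.2 _ q.start_mem_support) hadj hv) hp.2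

theorem nbhdSet_compOutside_subset : G.nbhdSet (G.compOutside X v) ⊆ X := by
  rintro w ⟨hw, u, hu, huw⟩
  by_contra hwX
  exact hw (mem_compOutside_of_adj_s16 hu huw hwX)

theorem compOutside_subset_compOutside (hv : v ∉ Y)
    (hN : G.nbhdSet (G.compOutside Y v) ⊆ X) : G.compOutside X v ⊆ G.compOutside Y v :=
  compOutside_subset_of_adj_closed (mem_compOutside_self hv) fun a _ _ hb hab ha =>
    by_contra fun hbC => hb (hN ⟨hbC, a, ha, hab⟩)

end Components

namespace RootedTreeDecomp

variable {V ι : Type} {G : SimpleGraph V} (𝒯 : RootedTreeDecomp V ι G)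
  {S X : Set V} {r s t c tmin tmax tp : ι} {u v w : V}

theorem inSubtree_trans (hrs : 𝒯.InSubtree r s) (hst : 𝒯.InSubtree s t) : 𝒯.InSubtree r t := by
  obtain ⟨m, rfl⟩ := hrs
  obtain ⟨n, rfl⟩ := hst
  exact ⟨m + n, Function.iterate_add_apply ..⟩

theorem eq_root_of_isPeriodicPt {n : ℕ} (hn : 0 < n)
    (ht : Function.IsPeriodicPt 𝒯.parent n t) : t = 𝒯.root := by
  obtain ⟨m, hm⟩ := 𝒯.reaches_root t
  calc t = 𝒯.parent^[n * m - m + m] t := by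
        rw [Nat.sub_add_cancel (Nat.le_mul_of_pos_left m hn)]; exact (ht.mul_const m).symm
    _ = 𝒯.root := by
        rw [Function.iterate_add_apply, hm, Function.iterate_fixed 𝒯.parent_root]

theorem not_inSubtree_of_isParent (hc : 𝒯.IsParent t c) (hst : 𝒯.InSubtree s t) :
    ¬𝒯.InSubtree c s := by
  rintro ⟨n, rfl⟩
  obtain ⟨m, rfl⟩ := hst
  refine hc.1 (𝒯.eq_root_of_isPeriodicPt (n + m).succ_pos ?_)
  rw [← Function.iterate_add_apply] at hc ⊢
  exact (Function.iterate_succ_apply ..).trans (congrArg _ hc.2)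

theorem bag_subset_Vt (t : ι) : 𝒯.bag t ⊆ 𝒯.Vt t := fun _ hv => ⟨t, ⟨0, rfl⟩, hv⟩

theorem Vt_subset_Vt (hst : 𝒯.InSubtree s t) : 𝒯.Vt t ⊆ 𝒯.Vt s :=
  fun _ ⟨t', ht', hv⟩ => ⟨t', 𝒯.inSubtree_trans hst ht', hv⟩

theorem exists_isParent_mem_Vt (hv : v ∈ 𝒯.Lt t) : ∃ c, 𝒯.IsParent t c ∧ v ∈ 𝒯.Vt c := by
  obtain ⟨⟨t', ⟨n, hn⟩, hvt'⟩, hvt⟩ := hv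
  induction n generalizing t with
  | zero => exact absurd (hn ▸ hvt') hvt
  | succ n ih =>
    rw [Function.iterate_succ_apply'] at hn
    by_cases hroot : 𝒯.parent^[n] t' = 𝒯.root
    · exact ih hvt (by rw [← hn, hroot, 𝒯.parent_root])
    · exact ⟨𝒯.parent^[n] t', ⟨hroot, hn⟩, t', ⟨n, rfl⟩, hvt'⟩

/-- Both bags containing the vertex are joined to the top node `m` of its subtree by chains of
bags containing it. As `s` is not below `t`, neither is `m`, so the chain from below `t` to `m`
passes through `t` and its parent. -/
theorem mem_adhesion (hv : v ∈ 𝒯.Vt t) (hvs : v ∈ 𝒯.bag s) (hts : ¬𝒯.InSubtree t s) :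
    v ∈ 𝒯.bag t ∩ 𝒯.bag (𝒯.parent t) := by
  obtain ⟨t', ⟨n, rfl⟩, hvt'⟩ := hv
  obtain ⟨m, -, hm⟩ := 𝒯.bags_connected v
  obtain ⟨a, ha, hva⟩ := hm t' hvt'
  obtain ⟨b, hb, -⟩ := hm s hvs
  have hna : n < a := by
    by_contra! han
    refine hts (𝒯.inSubtree_trans (s := m) ⟨n - a, ?_⟩ ⟨b, hb⟩)
    rw [← ha, ← Function.iterate_add_apply, Nat.sub_add_cancel han]
  rw [← Function.iterate_succ_apply' (f := 𝒯.parent)]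
  exact ⟨hva n hna.le, hva (n + 1) hna⟩

theorem Vt_inter_bag_subset (hc : 𝒯.IsParent t c) (hst : 𝒯.InSubtree s t) :
    𝒯.Vt c ∩ 𝒯.bag s ⊆ 𝒯.bag c ∩ 𝒯.bag t :=
  fun _ ⟨hv, hvs⟩ => hc.2 ▸ 𝒯.mem_adhesion hv hvs (𝒯.not_inSubtree_of_isParent hc hst)

theorem mem_Vt_of_adj (huw : G.Adj u w) (hu : u ∈ 𝒯.Vt t)
    (hadh : u ∉ 𝒯.bag t ∩ 𝒯.bag (𝒯.parent t)) : w ∈ 𝒯.Vt t := by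
  obtain ⟨s, hus, hws⟩ := 𝒯.bags_of_edges huw
  by_cases hts : 𝒯.InSubtree t s
  · exact ⟨s, hts, hws⟩
  · exact absurd (𝒯.mem_adhesion hu hus hts) hadh

section Adhesion

variable (hX : 𝒯.bag t ∩ 𝒯.bag (𝒯.parent t) ⊆ X)
include hX

theorem compOutside_subset_Vt (hv : v ∈ 𝒯.Vt t) : G.compOutside X v ⊆ 𝒯.Vt t :=
  compOutside_subset_of_adj_closed hv fun _ _ ha _ hab hat =>
    𝒯.mem_Vt_of_adj hab hat fun hadh => ha (hX hadh)

theorem nbhdSet_compOutside_subset_Vt (hv : v ∈ 𝒯.Vt t) :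
    G.nbhdSet (G.compOutside X v) ⊆ 𝒯.Vt t := fun _ ⟨_, _, hu, huw⟩ =>
  𝒯.mem_Vt_of_adj huw (𝒯.compOutside_subset_Vt hX hv hu)
    fun hadh => notMem_of_mem_compOutside hu (hX hadh)

theorem mem_Vt_of_mem_compOutside (hw : w ∈ G.compOutside X v) (hwt : w ∈ 𝒯.Vt t) : v ∈ 𝒯.Vt t :=
  𝒯.compOutside_subset_Vt hX hwt (mem_compOutside_symm hw)

end Adhesion

theorem isSChild_iff :
    𝒯.IsSChild S t c ↔ 𝒯.IsParent t c ∧ (𝒯.Vt c ∩ 𝒯.LS S t).Nonempty := by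
  have hset : (𝒯.LS S c ∪ 𝒯.XS S c) \ (𝒯.RS S t ∪ 𝒯.XS S t) = 𝒯.Vt c ∩ 𝒯.LS S t := by
    ext x
    have hbag : x ∈ 𝒯.bag c → x ∈ 𝒯.Vt c := fun hx => 𝒯.bag_subset_Vt c hx
    simp only [LS, XS, RS, Lt, Rt, Set.mem_sdiff, Set.mem_union, Set.mem_inter_iff,
      Set.mem_compl_iff]
    tauto
  rw [IsSChild, hset]

theorem exists_isSChild_mem_Vt (hv : v ∈ 𝒯.LS S t) : ∃ c, 𝒯.IsSChild S t c ∧ v ∈ 𝒯.Vt c := by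
  obtain ⟨c, hc, hvc⟩ := 𝒯.exists_isParent_mem_Vt hv.1
  exact ⟨c, 𝒯.isSChild_iff.mpr ⟨hc, v, hvc, hv⟩, hvc⟩

theorem isSChild_of_LS_nonempty (hc : 𝒯.IsParent t c) (hL : (𝒯.LS S c).Nonempty) :
    𝒯.IsSChild S t c := by
  obtain ⟨v, ⟨hvc, hvbag⟩, hvS⟩ := hL
  exact 𝒯.isSChild_iff.mpr ⟨hc, v, hvc, ⟨𝒯.Vt_subset_Vt ⟨1, hc.2⟩ hvc,
    fun hvt => hvbag (𝒯.Vt_inter_bag_subset hc ⟨0, rfl⟩ ⟨hvc, hvt⟩).1⟩, hvS⟩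

/-- The union `X_c` of the bags of the `S`-children of `t`. -/
def sChildBags (S : Set V) (t : ι) : Set V := {u | ∃ c, 𝒯.IsSChild S t c ∧ u ∈ 𝒯.bag c}

/-- The union `X_max ∪ X_p ∪ X_min` of the bags at and just above the ends of a trace path. -/
def endBags (tmin tmax tp : ι) : Set V := 𝒯.bag tmax ∪ 𝒯.bag tp ∪ 𝒯.bag tmin

/-- The set `X_path`: the `S`-free components of `G − (X_max ∪ X_p ∪ X_min)` whose closed
neighborhood avoids `X_c ∖ X_min` and which have a neighbor outside `X_p`. A component is given
by any of its vertices `v`, as `G.compOutside _ v`. -/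
def pathVertices (S : Set V) (tmin tmax tp : ι) : Set V :=
  {v | v ∉ 𝒯.endBags tmin tmax tp ∧
    G.compOutside (𝒯.endBags tmin tmax tp) v ∩ S = ∅ ∧
    (G.compOutside (𝒯.endBags tmin tmax tp) v ∪
      G.nbhdSet (G.compOutside (𝒯.endBags tmin tmax tp) v)) ∩
        (𝒯.sChildBags S tmin \ 𝒯.bag tmin) = ∅ ∧
    (G.nbhdSet (G.compOutside (𝒯.endBags tmin tmax tp) v) \ 𝒯.bag tp).Nonempty}

/-- Every component of `G − X_t` without a vertex of `S` (an `F`-component of the paper) is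
disjoint from `V_c` for all `S`-children `c` of `t`. -/
def SFreeCompsAvoidSChildren (S : Set V) (t : ι) : Prop :=
  ∀ v, v ∉ 𝒯.bag t → G.compOutside (𝒯.bag t) v ∩ S = ∅ → ∀ c, 𝒯.IsSChild S t c → v ∉ 𝒯.Vt c

theorem bag_tmax_subset_endBags : 𝒯.bag tmax ⊆ 𝒯.endBags tmin tmax tp :=
  Set.subset_union_left.trans Set.subset_union_left

theorem bag_tp_subset_endBags : 𝒯.bag tp ⊆ 𝒯.endBags tmin tmax tp :=
  Set.subset_union_right.trans Set.subset_union_left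

theorem bag_tmin_subset_endBags : 𝒯.bag tmin ⊆ 𝒯.endBags tmin tmax tp :=
  Set.subset_union_right

theorem adhesion_tmax_subset_endBags :
    𝒯.bag tmax ∩ 𝒯.bag (𝒯.parent tmax) ⊆ 𝒯.endBags tmin tmax tp :=
  Set.inter_subset_left.trans 𝒯.bag_tmax_subset_endBags

theorem adhesion_child_tmin_subset_endBags (hc : 𝒯.IsParent tmin c) :
    𝒯.bag c ∩ 𝒯.bag (𝒯.parent c) ⊆ 𝒯.endBags tmin tmax tp := by
  rw [hc.2]
  exact Set.inter_subset_right.trans 𝒯.bag_tmin_subset_endBags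

theorem endBags_sdiff_bag_tp_subset_Vt (hanc : 𝒯.InSubtree tmax tmin) :
    𝒯.endBags tmin tmax tp \ 𝒯.bag tp ⊆ 𝒯.Vt tmax := by
  rintro v ⟨(hv | hv) | hv, hvp⟩
  · exact 𝒯.bag_subset_Vt _ hv
  · exact absurd hv hvp
  · exact 𝒯.Vt_subset_Vt hanc (𝒯.bag_subset_Vt _ hv)

theorem Vt_child_inter_endBags_subset (hanc : 𝒯.InSubtree tmax tmin) (hp : 𝒯.IsParent tp tmax)
    (hc : 𝒯.IsParent tmin c) : 𝒯.Vt c ∩ 𝒯.endBags tmin tmax tp ⊆ 𝒯.bag tmin := by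
  have hp_anc : 𝒯.InSubtree tp tmin := 𝒯.inSubtree_trans ⟨1, hp.2⟩ hanc
  rintro v ⟨hvc, (hv | hv) | hv⟩
  · exact (𝒯.Vt_inter_bag_subset hc hanc ⟨hvc, hv⟩).2
  · exact (𝒯.Vt_inter_bag_subset hc hp_anc ⟨hvc, hv⟩).2
  · exact hv

theorem pathVertices_subset_Vt (hanc : 𝒯.InSubtree tmax tmin) (hp : 𝒯.IsParent tp tmax) :
    𝒯.pathVertices S tmin tmax tp ⊆ 𝒯.Vt tmax := by
  rintro v ⟨-, -, -, w, hwN, hwp⟩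
  have hw : w ∈ 𝒯.Vt tmax :=
    𝒯.endBags_sdiff_bag_tp_subset_Vt hanc ⟨nbhdSet_compOutside_subset hwN, hwp⟩
  obtain ⟨-, u, hu, huw⟩ := hwN
  have hut : u ∈ 𝒯.Vt tmax := 𝒯.mem_Vt_of_adj huw.symm hw fun hadh => hwp (hp.2 ▸ hadh.2)
  exact 𝒯.mem_Vt_of_mem_compOutside 𝒯.adhesion_tmax_subset_endBags hu hut

theorem notMem_Vt_of_mem_pathVertices (hanc : 𝒯.InSubtree tmax tmin) (hp : 𝒯.IsParent tp tmax)
    (hFmin : 𝒯.SFreeCompsAvoidSChildren S tmin) (hv : v ∈ 𝒯.pathVertices S tmin tmax tp)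
    (hc : 𝒯.IsSChild S tmin c) : v ∉ 𝒯.Vt c := by
  obtain ⟨hvY, hvS, -⟩ := hv
  intro hvc
  have hN : G.nbhdSet (G.compOutside (𝒯.endBags tmin tmax tp) v) ⊆ 𝒯.bag tmin := fun w hw =>
    𝒯.Vt_child_inter_endBags_subset hanc hp hc.1
      ⟨𝒯.nbhdSet_compOutside_subset_Vt (𝒯.adhesion_child_tmin_subset_endBags hc.1) hvc hw,
        nbhdSet_compOutside_subset hw⟩
  have hSfree : G.compOutside (𝒯.bag tmin) v ∩ S = ∅ :=
    Set.subset_eq_empty (Set.inter_subset_inter_left S (compOutside_subset_compOutside hvY hN)) hvS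
  exact hFmin v (fun h => hvY (𝒯.bag_tmin_subset_endBags h)) hSfree c hc hvc

theorem compOutside_inter_eq_empty (hLS : 𝒯.LS S tmax = 𝒯.LS S tmin) (hv : v ∈ 𝒯.Vt tmax)
    (hvc : ∀ c, 𝒯.IsSChild S tmin c → v ∉ 𝒯.Vt c) :
    G.compOutside (𝒯.endBags tmin tmax tp) v ∩ S = ∅ := by
  refine Set.eq_empty_of_forall_notMem fun s ⟨hs, hsS⟩ => ?_
  have hsL : s ∈ 𝒯.LS S tmax :=
    ⟨⟨𝒯.compOutside_subset_Vt 𝒯.adhesion_tmax_subset_endBags hv hs,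
      fun h => notMem_of_mem_compOutside hs (𝒯.bag_tmax_subset_endBags h)⟩, hsS⟩
  obtain ⟨c, hc, hsc⟩ := 𝒯.exists_isSChild_mem_Vt (hLS ▸ hsL)
  exact hvc c hc <|
    𝒯.mem_Vt_of_mem_compOutside (𝒯.adhesion_child_tmin_subset_endBags hc.1) hs hsc

theorem closedNbhd_inter_sChildBags_eq_empty (hvc : ∀ c, 𝒯.IsSChild S tmin c → v ∉ 𝒯.Vt c) :
    (G.compOutside (𝒯.endBags tmin tmax tp) v ∪
      G.nbhdSet (G.compOutside (𝒯.endBags tmin tmax tp) v)) ∩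
        (𝒯.sChildBags S tmin \ 𝒯.bag tmin) = ∅ := by
  refine Set.eq_empty_of_forall_notMem fun x ⟨hx, ⟨c, hc, hxc⟩, hxmin⟩ => hvc c hc ?_
  have hadh := 𝒯.adhesion_child_tmin_subset_endBags (tmax := tmax) (tp := tp) hc.1
  have hxVc : x ∈ 𝒯.Vt c := 𝒯.bag_subset_Vt c hxc
  rcases hx with hx | ⟨-, u, hu, hux⟩
  · exact 𝒯.mem_Vt_of_mem_compOutside hadh hx hxVc
  · have huc : u ∈ 𝒯.Vt c := 𝒯.mem_Vt_of_adj hux.symm hxVc fun h => hxmin (hc.1.2 ▸ h.2)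
    exact 𝒯.mem_Vt_of_mem_compOutside hadh hu huc

theorem nbhdSet_sdiff_bag_tp_nonempty (hc : 𝒯.IsSChild S tp tmax)
    (hFp : 𝒯.SFreeCompsAvoidSChildren S tp) (hvY : v ∉ 𝒯.endBags tmin tmax tp)
    (hvS : G.compOutside (𝒯.endBags tmin tmax tp) v ∩ S = ∅) (hv : v ∈ 𝒯.Vt tmax) :
    (G.nbhdSet (G.compOutside (𝒯.endBags tmin tmax tp) v) \ 𝒯.bag tp).Nonempty := by
  rw [Set.sdiff_nonempty]
  intro hN
  have hSfree : G.compOutside (𝒯.bag tp) v ∩ S = ∅ :=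
    Set.subset_eq_empty (Set.inter_subset_inter_left S (compOutside_subset_compOutside hvY hN)) hvS
  exact hFp v (fun h => hvY (𝒯.bag_tp_subset_endBags h)) hSfree tmax hc hv

theorem mem_pathVertices_iff (hanc : 𝒯.InSubtree tmax tmin)
    (hLS : 𝒯.LS S tmax = 𝒯.LS S tmin) (hL : (𝒯.LS S tmin).Nonempty)
    (hp : 𝒯.IsParent tp tmax) (hFmin : 𝒯.SFreeCompsAvoidSChildren S tmin)
    (hFp : 𝒯.SFreeCompsAvoidSChildren S tp) (hvY : v ∉ 𝒯.endBags tmin tmax tp) :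
    v ∈ 𝒯.pathVertices S tmin tmax tp ↔
      v ∈ 𝒯.Vt tmax ∧ ∀ c, 𝒯.IsSChild S tmin c → v ∉ 𝒯.Vt c := by
  refine ⟨fun hv => ⟨𝒯.pathVertices_subset_Vt hanc hp hv, fun c hc =>
    𝒯.notMem_Vt_of_mem_pathVertices hanc hp hFmin hv hc⟩, fun ⟨hv, hvc⟩ => ?_⟩
  have hvS : G.compOutside (𝒯.endBags tmin tmax tp) v ∩ S = ∅ :=
    𝒯.compOutside_inter_eq_empty hLS hv hvc
  have htmax : 𝒯.IsSChild S tp tmax := 𝒯.isSChild_of_LS_nonempty hp (hLS ▸ hL)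
  exact ⟨hvY, hvS, 𝒯.closedNbhd_inter_sChildBags_eq_empty hvc,
    𝒯.nbhdSet_sdiff_bag_tp_nonempty htmax hFp hvY hvS hv⟩

end RootedTreeDecomp

theorem statement16_general {V ι : Type} {G : SimpleGraph V} (S : Set V)
    (𝒯 : RootedTreeDecomp V ι G) (tmin tmax tp : ι) (hL : (𝒯.LS S tmin).Nonempty)
    (hLS : 𝒯.LS S tmax = 𝒯.LS S tmin) (hanc : 𝒯.InSubtree tmax tmin)
    (hp : 𝒯.IsParent tp tmax) (hFmin : 𝒯.SFreeCompsAvoidSChildren S tmin)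
    (hFp : 𝒯.SFreeCompsAvoidSChildren S tp) (v : V) :
    v ∈ 𝒯.endBags tmin tmax tp ∪ 𝒯.pathVertices S tmin tmax tp ↔
      v ∈ 𝒯.bag tp ∨
        (v ∈ 𝒯.Vt tmax ∧ ∀ c, 𝒯.IsSChild S tmin c → v ∉ 𝒯.Vt c \ 𝒯.bag tmin) := by
  by_cases hvY : v ∈ 𝒯.endBags tmin tmax tp
  · refine iff_of_true (Or.inl hvY) (or_iff_not_imp_left.mpr fun hvp => ?_)
    exact ⟨𝒯.endBags_sdiff_bag_tp_subset_Vt hanc ⟨hvY, hvp⟩, fun c hc hvc =>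
      hvc.2 (𝒯.Vt_child_inter_endBags_subset hanc hp hc.1 ⟨hvc.1, hvY⟩)⟩
  · have hvp : v ∉ 𝒯.bag tp := fun h => hvY (𝒯.bag_tp_subset_endBags h)
    have hvmin : v ∉ 𝒯.bag tmin := fun h => hvY (𝒯.bag_tmin_subset_endBags h)
    simp only [Set.mem_union, hvY, hvp, false_or, Set.mem_sdiff, hvmin, not_false_eq_true,
      and_true]
    exact 𝒯.mem_pathVertices_iff hanc hLS hL hp hFmin hFp hvY

/-- (Lemma `lem:vx` of the paper.)  With `tmax` and `tmin` the
top and bottom nodes of the directed path of an `S`-trace with nonempty `L`-part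
in a slim `S`-nice tree decomposition of the connected graph `G`, with `tp` the
parent of `tmax`, under the `F`-component assumptions for `tmin` and `tp`, a
vertex lies in `V_X = X_max ∪ X_p ∪ X_min ∪ X_path` if and only if it lies in
`X_p`, or it lies in `V_{tmax}` and in no `V_t ∖ X_min` for an `S`-child `t` of
`tmin`. -/
theorem statement16 {V ι : Type} [Fintype V] [DecidableEq V] {G : SimpleGraph V}
    (hconn : G.Connected) (S : Set V) (k : ℕ)
    (𝒯 : RootedTreeDecomp V ι G)
    (hnice : 𝒯.IsSNice S) (hslim : 𝒯.IsSlim S k) (hw : 𝒯.HasWidth k)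
    (tmin tmax tp : ι)
    (hL : (𝒯.LS S tmin).Nonempty)
    (hbot : ∀ t', 𝒯.STrace S t' = 𝒯.STrace S tmin → 𝒯.InSubtree t' tmin)
    (htr : 𝒯.STrace S tmax = 𝒯.STrace S tmin)
    (htop : ∀ t', 𝒯.STrace S t' = 𝒯.STrace S tmin → 𝒯.InSubtree tmax t')
    (hp : 𝒯.IsParent tp tmax)
    (hFmin : ∀ v, v ∉ 𝒯.bag tmin → G.compOutside (𝒯.bag tmin) v ∩ S = ∅ →
      ∀ t, 𝒯.IsSChild S tmin t → v ∉ 𝒯.Vt t)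
    (hFp : ∀ v, v ∉ 𝒯.bag tp → G.compOutside (𝒯.bag tp) v ∩ S = ∅ →
      ∀ t, 𝒯.IsSChild S tp t → v ∉ 𝒯.Vt t)
    (Xc Y Xpath VX : Set V)
    (hXc : Xc = {u | ∃ t, 𝒯.IsSChild S tmin t ∧ u ∈ 𝒯.bag t})
    (hY : Y = 𝒯.bag tmax ∪ 𝒯.bag tp ∪ 𝒯.bag tmin)
    (hXpath : Xpath = {v | v ∉ Y ∧ G.compOutside Y v ∩ S = ∅ ∧
      (G.compOutside Y v ∪ G.nbhdSet (G.compOutside Y v)) ∩ (Xc \ 𝒯.bag tmin) = ∅ ∧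
      (G.nbhdSet (G.compOutside Y v) \ 𝒯.bag tp).Nonempty})
    (hVX : VX = Y ∪ Xpath) :
    ∀ v : V, v ∈ VX ↔ (v ∈ 𝒯.bag tp ∨
      (v ∈ 𝒯.Vt tmax ∧ ∀ t, 𝒯.IsSChild S tmin t → v ∉ 𝒯.Vt t \ 𝒯.bag tmin)) := by
  subst hVX hXpath hY hXc
  exact statement16_general S 𝒯 tmin tmax tp hL (congrArg Prod.fst htr) (htop tmin rfl) hp hFmin hFp
end
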